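/- arXiv:2302.06336 — 4 statements merged into one kernel-verified Lean document; each statement's English description precedes it below -/
import Mathlib

section
/- There is an absolute constant C > 0 such that for every integer n ≥ 2 there exists a subset S of ZMod n with |S| ≤ C · n^(2/3) · (log n)^(1/3) and with the following covering property: for all nonnegative integers k1, k2, k3 with k1 + k2 + k3 = n, there exists i ∈ ZMod n such that i ∈ S, i + k1 ∈ S and i + k1 + k2 ∈ S. -/
/-!
The covering set is explicit, and it needs no logarithm. Let `q = ⌈n^(1/k)⌉` and let `S ⊆ ZMod n`
consist of the residues of the integers below `2 * q ^ k` with a zero among their `k` lowest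
base-`q` digits: there are at most `2 * k * q ^ (k - 1) = O(n^(1 - 1/k))` of these. Given shifts
`a₀, …, aₖ₋₁ < q ^ k`, choose the base-`q` digits of a translation `i` one at a time from the
bottom: the `j`-th digit of `i` can be chosen so that the `j`-th digit of `i + aⱼ` is zero, and the
higher digits of `i` do not affect it. Hence `S` contains a translate of every `k`-point pattern.
Pairs of pants correspond to the patterns `(0, k₁, k₁ + k₂)`, and `log n` is bounded below for
`n ≥ 2`.
-/

open Finset

/-- The integers below `2 * q ^ k` one of whose `k` lowest base-`q` digits is zero, the `j`-th digit
of `x` being zero when `q ∣ x / q ^ j`. The bound leaves room for sums of two integers below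
`q ^ k`; the residues modulo `n` of these integers form the covering set. -/
def zeroDigitSet (q k : ℕ) : Finset ℕ :=
  {x ∈ range (2 * q ^ k) | ∃ j : Fin k, q ∣ x / q ^ (j : ℕ)}

lemma card_filter_dvd_div_le (m q d : ℕ) : #{x ∈ range (m * (q * d)) | q ∣ x / d} ≤ m * d := by
  have hsub : {x ∈ range (m * (q * d)) | q ∣ x / d} ⊆
      (range m ×ˢ range d).image fun p ↦ d * (q * p.1) + p.2 := by
    intro x hx
    simp only [mem_filter, mem_range] at hx
    obtain ⟨hxlt, c, hc⟩ := hx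
    have hx_eq : d * (q * c) + x % d = x := hc ▸ Nat.div_add_mod x d
    have hd : 0 < d := Nat.pos_of_ne_zero fun h ↦ by simp [h] at hxlt
    have hcm : c < m := by
      refine lt_of_mul_lt_mul_right (a := q * d) ?_ (Nat.zero_le _)
      calc c * (q * d) = d * (x / d) := by rw [hc]; ring
        _ ≤ x := Nat.mul_div_le x d
        _ < m * (q * d) := hxlt
    exact mem_image.2 ⟨(c, x % d), by simp [hcm, Nat.mod_lt x hd], hx_eq⟩
  simpa using (card_le_card hsub).trans card_image_le

lemma card_filter_dvd_div_pow_le (m q : ℕ) {j k : ℕ} (hj : j < k) :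
    #{x ∈ range (m * q ^ k) | q ∣ x / q ^ j} ≤ m * q ^ (k - 1) := by
  obtain ⟨l, rfl⟩ : ∃ l, k = j + 1 + l := Nat.exists_eq_add_of_le hj
  have hpow : m * q ^ (j + 1 + l) = m * q ^ l * (q * q ^ j) := by ring
  have hpow_pred : m * q ^ (j + 1 + l - 1) = m * q ^ l * q ^ j := by
    rw [Nat.add_right_comm, Nat.add_sub_cancel]
    ring
  rw [hpow, hpow_pred]
  exact card_filter_dvd_div_le _ _ _

lemma card_zeroDigitSet_le (q k : ℕ) : #(zeroDigitSet q k) ≤ k * (2 * q ^ (k - 1)) := by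
  have hunion : zeroDigitSet q k =
      univ.biUnion fun j : Fin k ↦ {x ∈ range (2 * q ^ k) | q ∣ x / q ^ (j : ℕ)} := by
    ext x
    simp [zeroDigitSet]
  rw [hunion]
  simpa using card_biUnion_le_card_mul univ _ _ fun (j : Fin k) _ ↦
    card_filter_dvd_div_pow_le 2 q j.isLt

lemma exists_lt_dvd_add {q : ℕ} (hq : 0 < q) (m : ℕ) : ∃ s < q, q ∣ m + s := by
  refine ⟨m * (q - 1) % q, Nat.mod_lt _ hq, ?_⟩
  have hmul : m + m * (q - 1) = m * q := by
    rw [← mul_one_add, add_tsub_cancel_of_le (Nat.one_le_of_lt hq)]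
  rw [Nat.dvd_iff_mod_eq_zero, Nat.add_mod_mod, hmul, Nat.mul_mod_left]

lemma exists_lt_pow_forall_dvd_add_div {q : ℕ} (hq : 0 < q) {k : ℕ} (a : Fin k → ℕ) :
    ∃ i < q ^ k, ∀ j : Fin k, q ∣ (i + a j) / q ^ (j : ℕ) := by
  induction k with
  | zero => exact ⟨0, by simp⟩
  | succ k ih =>
    obtain ⟨i, hi, hdvd⟩ := ih fun j ↦ a j.castSucc
    obtain ⟨s, hs, hsdvd⟩ := exists_lt_dvd_add hq ((i + a (Fin.last k)) / q ^ k)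
    refine ⟨i + s * q ^ k, ?_, Fin.lastCases ?_ fun j ↦ ?_⟩
    · calc i + s * q ^ k < (s + 1) * q ^ k := by linarith
        _ ≤ q ^ (k + 1) := by rw [pow_succ']; gcongr; exact hs
    · rwa [add_right_comm, Fin.val_last, Nat.add_mul_div_right _ _ (by positivity)]
    · obtain ⟨c, hc⟩ : q ^ ((j : ℕ) + 1) ∣ q ^ k := pow_dvd_pow q j.isLt
      have hsplit : s * q ^ k = q * (s * c) * q ^ (j : ℕ) := by
        rw [hc]
        ring
      rw [add_right_comm, Fin.val_castSucc, hsplit, Nat.add_mul_div_right _ _ (by positivity)]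
      exact (hdvd j).add (dvd_mul_right _ _)

lemma exists_forall_add_mem_zeroDigitSet {q k : ℕ} (hq : 0 < q) {a : Fin k → ℕ}
    (ha : ∀ j, a j < q ^ k) : ∃ i, ∀ j, i + a j ∈ zeroDigitSet q k := by
  obtain ⟨i, hi, hdvd⟩ := exists_lt_pow_forall_dvd_add_div hq a
  exact ⟨i, fun j ↦ mem_filter.2 ⟨mem_range.2 (by linarith [ha j]), j, hdvd j⟩⟩

lemma exists_finset_zmod_forall_exists_add_mem {n q k : ℕ} [NeZero n] (hq : 0 < q)
    (hn : n ≤ q ^ k) :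
    ∃ S : Finset (ZMod n), #S ≤ k * (2 * q ^ (k - 1)) ∧
      ∀ a : Fin k → ZMod n, ∃ i, ∀ j, i + a j ∈ S := by
  refine ⟨(zeroDigitSet q k).image (↑), card_image_le.trans (card_zeroDigitSet_le q k),
    fun a ↦ ?_⟩
  obtain ⟨i, hi⟩ := exists_forall_add_mem_zeroDigitSet hq (a := fun j ↦ (a j).val)
    fun j ↦ (ZMod.val_lt _).trans_le hn
  exact ⟨i, fun j ↦ mem_image.2 ⟨_, hi j, by simp⟩⟩

lemma exists_le_pow_and_pow_pred_le_rpow {n k : ℕ} (hn : n ≠ 0) (hk : k ≠ 0) :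
    ∃ q : ℕ, 0 < q ∧ n ≤ q ^ k ∧
      (q : ℝ) ^ (k - 1) ≤ 2 ^ (k - 1) * (n : ℝ) ^ (1 - 1 / (k : ℝ)) := by
  set r : ℝ := (n : ℝ) ^ (k : ℝ)⁻¹ with hr
  have hr_one : 1 ≤ r :=
    Real.one_le_rpow (Nat.one_le_cast.2 (Nat.pos_of_ne_zero hn)) (by positivity)
  have hr_pow : r ^ k = n := Real.rpow_inv_natCast_pow n.cast_nonneg hk
  have hr_pow_pred : r ^ (k - 1) = (n : ℝ) ^ (1 - 1 / (k : ℝ)) := by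
    rw [hr, ← Real.rpow_mul_natCast n.cast_nonneg, Nat.cast_pred (Nat.pos_of_ne_zero hk)]
    congr 1
    field_simp
  refine ⟨⌈r⌉₊, Nat.ceil_pos.2 (by linarith), ?_, ?_⟩
  · have hle : (n : ℝ) ≤ (⌈r⌉₊ : ℝ) ^ k := by
      rw [← hr_pow]
      gcongr
      exact Nat.le_ceil r
    exact_mod_cast hle
  · rw [← hr_pow_pred, ← mul_pow]
    gcongr
    exact Nat.ceil_le_two_mul (by linarith)

lemma half_le_log_rpow {x p : ℝ} (hx : 2 ≤ x) (hp₀ : 0 ≤ p) (hp₁ : p ≤ 1) :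
    1 / 2 ≤ Real.log x ^ p := by
  have hlog : 1 / 2 ≤ Real.log x :=
    calc (1 / 2 : ℝ) ≤ Real.log 2 := by linarith [Real.log_two_gt_d9]
      _ ≤ Real.log x := Real.log_le_log (by norm_num) hx
  calc (1 / 2 : ℝ) ≤ (1 / 2) ^ p :=
        Real.self_le_rpow_of_le_one (by norm_num) (by norm_num) hp₁
    _ ≤ Real.log x ^ p := by gcongr

theorem universal_pants_types_unlabelled_general {n k : ℕ} [NeZero n] (hk : k ≠ 0) :
    ∃ S : Finset (ZMod n), (#S : ℝ) ≤ k * 2 ^ k * (n : ℝ) ^ (1 - 1 / (k : ℝ)) ∧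
      ∀ a : Fin k → ZMod n, ∃ i, ∀ j, i + a j ∈ S := by
  obtain ⟨q, hq, hnq, hq_pow⟩ := exists_le_pow_and_pow_pred_le_rpow (NeZero.ne n) hk
  obtain ⟨S, hcard, hS⟩ := exists_finset_zmod_forall_exists_add_mem hq hnq
  refine ⟨S, ?_, hS⟩
  calc (#S : ℝ) ≤ k * (2 * q ^ (k - 1)) := by exact_mod_cast hcard
    _ ≤ k * (2 * (2 ^ (k - 1) * (n : ℝ) ^ (1 - 1 / (k : ℝ)))) := by gcongr
    _ = k * 2 ^ k * (n : ℝ) ^ (1 - 1 / (k : ℝ)) := by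
      rw [← mul_pow_sub_one hk (2 : ℝ)]
      ring

/-- There is an absolute constant `C > 0` such that for every `n ≥ 2` there is a subset `S`
of `ZMod n` of size at most `C * n^(2/3) * (log n)^(1/3)` such that for all naturals
`k1, k2, k3` with `k1 + k2 + k3 = n` there is `i ∈ S` with `i + k1 ∈ S` and
`i + k1 + k2 ∈ S`. -/
theorem universal_pants_types_unlabelled :
    ∃ C : ℝ, 0 < C ∧ ∀ n : ℕ, 2 ≤ n →
      ∃ S : Finset (ZMod n),
        (S.card : ℝ) ≤ C * (n : ℝ) ^ ((2 : ℝ) / 3) * (Real.log n) ^ ((1 : ℝ) / 3) ∧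
        ∀ k1 k2 k3 : ℕ, k1 + k2 + k3 = n →
          ∃ i : ZMod n, i ∈ S ∧ i + (k1 : ZMod n) ∈ S ∧
            i + (k1 : ZMod n) + (k2 : ZMod n) ∈ S := by
  -- `48 = 2 * (3 * 2 ^ 3)`, where the factor `2` makes up for `1 / 2 ≤ (log n) ^ (1 / 3)`.
  refine ⟨48, by norm_num, fun n hn ↦ ?_⟩
  have : NeZero n := ⟨by omega⟩
  obtain ⟨S, hcard, hS⟩ := universal_pants_types_unlabelled_general (n := n) three_ne_zero
  refine ⟨S, ?_, fun k1 k2 _ _ ↦ ?_⟩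
  · have hlog : 1 / 2 ≤ Real.log n ^ ((1 : ℝ) / 3) :=
      half_le_log_rpow (by exact_mod_cast hn) (by norm_num) (by norm_num)
    calc (#S : ℝ) ≤ 48 * (n : ℝ) ^ ((2 : ℝ) / 3) * (1 / 2) := by
          convert hcard using 1
          norm_num
          ring
      _ ≤ 48 * (n : ℝ) ^ ((2 : ℝ) / 3) * Real.log n ^ ((1 : ℝ) / 3) := by gcongr
  · obtain ⟨i, hi⟩ := hS ![0, k1, k1 + k2]
    exact ⟨i, by simpa using hi 0, by simpa using hi 1, by simpa [add_assoc] using hi 2⟩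
end

section
/- There exist a constant c > 0 and an integer N such that for every n ≥ N the following holds: if E is a family of chords of the n-gon such that for every triple (k1, k2, k3) of nonnegative integers with k1 ≤ k2 ≤ k3 and k1 + k2 + k3 = n − 3 there exist a permutation (k1', k2', k3') of (k1, k2, k3) and a ∈ ZMod n at which E realizes the gap type (k1', k2', k3'), then |E| ≥ c · n^(4/3). -/
/-!
A triple `{i, q + j, r}` with `i, j < q` and `2 * q ≤ r` determines `i` and `j`, so the `n`-gon has
`Ω(n^2)` topological types of triangles. If `E` realizes all of them, it spans `Ω(n^2)` triangles.
On the other hand, by the discrete Loomis–Whitney inequality `m` chords span only `O(m^(3/2))`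
triangles: the three coordinate projections of the set of ordered triangles consist of oriented
chords. Hence `n^2 = O(|E|^(3/2))`.
-/

/-- A family `E` of chords of the `n`-gon (vertices identified with `ZMod n`) realizes the
gap type `(k1, k2, k3)` at the vertex `a` if the three chords of the corresponding triangle
all belong to `E`. -/
def RealizesGapType (n : ℕ) (E : Finset (Sym2 (ZMod n))) (k1 k2 k3 : ℕ) (a : ZMod n) : Prop :=
  s(a, a + (k1 : ZMod n) + 1) ∈ E ∧
  s(a + (k1 : ZMod n) + 1, a + (k1 : ZMod n) + (k2 : ZMod n) + 2) ∈ E ∧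
  s(a + (k1 : ZMod n) + (k2 : ZMod n) + 2, a) ∈ E

open Finset

section LoomisWhitney

variable {α β γ : Type*} [DecidableEq α] [DecidableEq β] [DecidableEq γ]

lemma sum_card_fiber_sq_le (T : Finset (α × β × γ)) :
    ∑ e ∈ T.image (fun t => (t.1, t.2.1)), #{t ∈ T | (t.1, t.2.1) = e} ^ 2 ≤
      #(T.image fun t => (t.2.1, t.2.2)) * #(T.image fun t => (t.2.2, t.1)) := by
  simp_rw [sq, ← card_product]
  rw [← card_sigma]
  -- Triples `(x, y, z)` and `(x, y, z')` in a common fiber are determined by `(y, z)`, `(z', x)`.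
  refine card_le_card_of_injOn
    (fun p => ((p.2.1.2.1, p.2.1.2.2), (p.2.2.2.2, p.2.2.1))) ?_ ?_
  · rintro ⟨e, t, t'⟩ h
    simp only [coe_sigma, Set.mem_sigma_iff, mem_coe, mem_product, mem_filter] at h
    exact mem_product.2 ⟨mem_image_of_mem _ h.2.1.1, mem_image_of_mem _ h.2.2.1⟩
  · rintro ⟨e, ⟨x, y, z⟩, x', y', z'⟩ h ⟨f, ⟨u, v, w⟩, u', v', w'⟩ h' pairs_eq
    simp only [coe_sigma, Set.mem_sigma_iff, mem_coe, mem_product, mem_filter] at h h'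
    grind

/-- The discrete Loomis–Whitney inequality in dimension three. -/
theorem card_sq_le_mul_card_image_pairs (T : Finset (α × β × γ)) :
    #T ^ 2 ≤ #(T.image fun t => (t.1, t.2.1)) *
      (#(T.image fun t => (t.2.1, t.2.2)) * #(T.image fun t => (t.2.2, t.1))) :=
  calc #T ^ 2
      = (∑ e ∈ T.image (fun t => (t.1, t.2.1)), #{t ∈ T | (t.1, t.2.1) = e}) ^ 2 := by
        rw [← card_eq_sum_card_image]
    _ ≤ _ := sq_sum_le_card_mul_sum_sq
    _ ≤ _ := Nat.mul_le_mul_left _ (sum_card_fiber_sq_le T)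

end LoomisWhitney

section Triangles

variable {V : Type*}

lemma card_le_two_mul_card_of_forall_sym2Mk_mem {A : Finset (V × V)} {E : Finset (Sym2 V)}
    (h : ∀ p ∈ A, s(p.1, p.2) ∈ E) : #A ≤ 2 * #E := by
  classical
  refine card_le_mul_card_image_of_maps_to (f := fun p : V × V => s(p.1, p.2)) h 2 fun e _ => ?_
  induction e with
  | _ x y =>
    have fiber_subset : {p ∈ A | s(p.1, p.2) = s(x, y)} ⊆ {(x, y), (y, x)} := by
      rintro ⟨u, v⟩ huv
      simpa using (mem_filter.1 huv).2
    exact (card_le_card fiber_subset).trans card_le_two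

variable [Fintype V] [DecidableEq V]

/-- The ordered triples of vertices, not necessarily distinct, whose three pairs belong to `E`.
Every triangle spanned by `E` is counted once for each ordering of its vertices. -/
def orderedTriangles (E : Finset (Sym2 V)) : Finset (V × V × V) :=
  {t | s(t.1, t.2.1) ∈ E ∧ s(t.2.1, t.2.2) ∈ E ∧ s(t.2.2, t.1) ∈ E}

lemma mem_orderedTriangles {E : Finset (Sym2 V)} {t : V × V × V} :
    t ∈ orderedTriangles E ↔ s(t.1, t.2.1) ∈ E ∧ s(t.2.1, t.2.2) ∈ E ∧ s(t.2.2, t.1) ∈ E := by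
  simp only [orderedTriangles, mem_filter_univ]

theorem card_orderedTriangles_sq_le (E : Finset (Sym2 V)) :
    #(orderedTriangles E) ^ 2 ≤ (2 * #E) ^ 3 := by
  have card_image_le_of_mem (f : V × V × V → V × V)
      (hf : ∀ t ∈ orderedTriangles E, s((f t).1, (f t).2) ∈ E) :
      #((orderedTriangles E).image f) ≤ 2 * #E :=
    card_le_two_mul_card_of_forall_sym2Mk_mem (forall_mem_image.2 hf)
  calc #(orderedTriangles E) ^ 2 ≤ _ := card_sq_le_mul_card_image_pairs _
    _ ≤ 2 * #E * (2 * #E * (2 * #E)) := by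
      gcongr <;> refine card_image_le_of_mem _ fun t ht => ?_
      exacts [(mem_orderedTriangles.1 ht).1, (mem_orderedTriangles.1 ht).2.1,
        (mem_orderedTriangles.1 ht).2.2]
    _ = (2 * #E) ^ 3 := by ring

end Triangles

lemma sq_le_card_of_forall_sorted_mem {m : ℕ} {S : Finset (Multiset ℕ)}
    (hS : ∀ k1 k2 k3 : ℕ, k1 ≤ k2 → k2 ≤ k3 → k1 + k2 + k3 = m → {k1, k2, k3} ∈ S) :
    (m / 6) ^ 2 ≤ #S := by
  set q := m / 6
  calc q ^ 2 = #(range q ×ˢ range q) := by rw [card_product, card_range, sq]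
    _ ≤ #S := card_le_card_of_injOn
      (fun p => {p.1, q + p.2, m - p.1 - (q + p.2)}) ?maps_to ?inj_on
  case maps_to =>
    rintro ⟨i, j⟩ hij
    simp only [coe_product, coe_range, Set.mem_prod, Set.mem_Iio] at hij
    apply hS <;> dsimp only <;> omega
  case inj_on =>
    rintro ⟨i, j⟩ hij ⟨i', j'⟩ hij' types_eq
    simp only [coe_product, coe_range, Set.mem_prod, Set.mem_Iio] at hij hij' types_eq
    have hi : i ∈ ({i', q + j', m - i' - (q + j')} : Multiset ℕ) := types_eq ▸ by simp
    have hj : q + j ∈ ({i', q + j', m - i' - (q + j')} : Multiset ℕ) := types_eq ▸ by simp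
    simp only [Multiset.insert_eq_cons, Multiset.mem_cons, Multiset.mem_singleton] at hi hj
    exact Prod.ext (by dsimp only; omega) (by dsimp only; omega)

section Polygon

variable {n : ℕ}

/-- The topological type of the triangle with vertices `x`, `y`, `z` listed in cyclic order: the
numbers of vertices of the `n`-gon strictly inside the arcs from `x` to `y`, `y` to `z` and `z` to
`x`. The truncated subtraction only matters for repeated vertices. -/
def gapType (t : ZMod n × ZMod n × ZMod n) : Multiset ℕ :=
  {(t.2.1 - t.1).val - 1, (t.2.2 - t.2.1).val - 1, (t.1 - t.2.2).val - 1}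

lemma gapType_eq {k1 k2 k3 : ℕ} (hk : k1 + k2 + k3 + 3 = n) (a : ZMod n) :
    gapType (a, a + k1 + 1, a + k1 + k2 + 2) = {k1, k2, k3} := by
  have val_sub_one {k : ℕ} (hkn : k + 1 < n) : ((k : ZMod n) + 1).val - 1 = k := by
    rw [← Nat.cast_succ, ZMod.val_natCast_of_lt hkn, Nat.add_sub_cancel]
  have cast_sum : (k1 + k2 + k3 + 3 : ZMod n) = 0 := by
    exact_mod_cast (congrArg Nat.cast hk).trans (ZMod.natCast_self n)
  have gap1 : a + k1 + 1 - a = (k1 : ZMod n) + 1 := by ring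
  have gap2 : a + k1 + k2 + 2 - (a + k1 + 1) = (k2 : ZMod n) + 1 := by ring
  have gap3 : a - (a + k1 + k2 + 2) = (k3 : ZMod n) + 1 := by linear_combination -cast_sum
  simp only [gapType, gap1, gap2, gap3]
  rw [val_sub_one (by omega), val_sub_one (by omega), val_sub_one (by omega)]

lemma RealizesGapType.mem_image_gapType [NeZero n] {E : Finset (Sym2 (ZMod n))} {k1 k2 k3 : ℕ}
    {a : ZMod n} (h : RealizesGapType n E k1 k2 k3 a) (hk : k1 + k2 + k3 + 3 = n) :
    {k1, k2, k3} ∈ (orderedTriangles E).image gapType :=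
  mem_image.2 ⟨(a, a + k1 + 1, a + k1 + k2 + 2), mem_orderedTriangles.2 h, gapType_eq hk a⟩

theorem sq_le_card_orderedTriangles [NeZero n] (hn : 3 ≤ n) {E : Finset (Sym2 (ZMod n))}
    (hE : ∀ k1 k2 k3 : ℕ, k1 ≤ k2 → k2 ≤ k3 → k1 + k2 + k3 = n - 3 →
      ∃ k1' k2' k3' : ℕ, ({k1', k2', k3'} : Multiset ℕ) = ({k1, k2, k3} : Multiset ℕ) ∧
        ∃ a : ZMod n, RealizesGapType n E k1' k2' k3' a) :
    ((n - 3) / 6) ^ 2 ≤ #(orderedTriangles E) := by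
  refine le_trans (sq_le_card_of_forall_sorted_mem fun k1 k2 k3 h12 h23 hsum => ?_)
    (card_image_le (f := gapType))
  obtain ⟨k1', k2', k3', hperm, a, ha⟩ := hE k1 k2 k3 h12 h23 hsum
  have sum_eq : k1' + (k2' + k3') = k1 + (k2 + k3) := by
    simpa using congrArg Multiset.sum hperm
  exact hperm ▸ ha.mem_image_gapType (by omega)

end Polygon

lemma rpow_four_thirds_le_of_pow_le {x y : ℝ} (hx : 0 ≤ x) (hy : 0 ≤ y) (h : x ^ 4 ≤ y ^ 3) :
    x ^ ((4 : ℝ) / 3) ≤ y := by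
  rw [div_eq_mul_inv, Real.rpow_mul hx, Real.rpow_inv_le_iff_of_pos (by positivity) hy three_pos]
  exact_mod_cast h

/-- Any family of chords of the `n`-gon realizing all topological types of triangles
(i.e. every gap type `(k1, k2, k3)` with `k1 ≤ k2 ≤ k3` and `k1 + k2 + k3 = n - 3`,
up to permutation of the three gaps) has size at least `c * n^(4/3)` for an absolute
constant `c > 0`, once `n` is large enough. -/
theorem universal_triangle_types_lower_bound :
    ∃ c : ℝ, 0 < c ∧ ∃ N : ℕ, ∀ n : ℕ, N ≤ n →
      ∀ E : Finset (Sym2 (ZMod n)),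
        (∀ k1 k2 k3 : ℕ, k1 ≤ k2 → k2 ≤ k3 → k1 + k2 + k3 = n - 3 →
          ∃ k1' k2' k3' : ℕ, ({k1', k2', k3'} : Multiset ℕ) = ({k1, k2, k3} : Multiset ℕ) ∧
            ∃ a : ZMod n, RealizesGapType n E k1' k2' k3' a) →
        c * (n : ℝ) ^ ((4 : ℝ) / 3) ≤ (E.card : ℝ) := by
  refine ⟨1 / 144, by norm_num, 9, fun n hn E hE => ?_⟩
  have : NeZero n := ⟨by omega⟩
  have n_le : n ≤ 24 * ((n - 3) / 6) := by omega
  have pow_le : n ^ 4 ≤ (144 * #E) ^ 3 :=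
    calc n ^ 4 ≤ (24 * ((n - 3) / 6)) ^ 4 := by gcongr
      _ = 24 ^ 4 * (((n - 3) / 6) ^ 2) ^ 2 := by ring
      _ ≤ 24 ^ 4 * #(orderedTriangles E) ^ 2 := by
        gcongr
        exact sq_le_card_orderedTriangles (by omega) hE
      _ ≤ 24 ^ 4 * (2 * #E) ^ 3 := Nat.mul_le_mul_left _ (card_orderedTriangles_sq_le E)
      _ = 24 ^ 4 * 2 ^ 3 * #E ^ 3 := by ring
      _ ≤ 144 ^ 3 * #E ^ 3 := by gcongr; norm_num
      _ = (144 * #E) ^ 3 := by ring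
  have rpow_le : (n : ℝ) ^ ((4 : ℝ) / 3) ≤ 144 * #E :=
    rpow_four_thirds_le_of_pow_le (by positivity) (by positivity) (by exact_mod_cast pow_le)
  linarith
end

section
/- For every real ε > 0 there exists a constant c > 0 such that for all integers n ≥ 4 the following holds: if E is a family of diagonals of the n-gon such that for every triangulation T of the n-gon there exists a dihedral symmetry σ of ZMod n with σ(d) ∈ E for every diagonal d of T, then |E| ≥ c · n^(2−ε). -/
/-- A diagonal of the `n`-gon (vertices identified with `ZMod n` in cyclic order) is an
unordered pair `{a, b}` with `b ∉ {a - 1, a, a + 1}`. -/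
def IsDiagonal (n : ℕ) (d : Sym2 (ZMod n)) : Prop :=
  ∃ a b : ZMod n, d = s(a, b) ∧ b ≠ a - 1 ∧ b ≠ a ∧ b ≠ a + 1

/-- `y` lies strictly inside the open cyclic arc from `x` to `z` (going in the positive
direction) in `ZMod n`. -/
def BtwArc (n : ℕ) (x y z : ZMod n) : Prop :=
  0 < (y - x).val ∧ (y - x).val < (z - x).val

/-- Two chords of the `n`-gon cross if their endpoint pairs separate each other on the
circle: one endpoint of the second chord lies strictly in the open arc from `a` to `b`
and the other lies strictly in the open arc from `b` to `a`. -/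
def Crosses (n : ℕ) (d d' : Sym2 (ZMod n)) : Prop :=
  ∃ a b c e : ZMod n, d = s(a, b) ∧ d' = s(c, e) ∧ BtwArc n a c b ∧ BtwArc n b e a

/-- A triangulation of the `n`-gon is a set of `n - 3` pairwise noncrossing diagonals. -/
def IsPolygonTriangulation (n : ℕ) (T : Finset (Sym2 (ZMod n))) : Prop :=
  T.card = n - 3 ∧ (∀ d ∈ T, IsDiagonal n d) ∧ ∀ d ∈ T, ∀ d' ∈ T, ¬ Crosses n d d'

/-- A dihedral symmetry of `ZMod n`: a map `x ↦ x + t` or `x ↦ t - x`. -/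
def IsDihedralSymmetry (n : ℕ) (σ : ZMod n → ZMod n) : Prop :=
  (∃ t : ZMod n, σ = fun x => x + t) ∨ (∃ t : ZMod n, σ = fun x => t - x)

/-!
The bound comes from counting vertices of large degree. Fix `k` with `1 / k < ε`, cut the polygon
into `k` arcs of about `n / k` sides, choose an interior vertex (a *hub*) in each arc, join it to
all vertices of its arc, and triangulate the rest arbitrarily. A symmetry carrying this
triangulation into `E` carries every hub to a vertex of degree at least about `n / k` in `E`; let
`D` be the set of such vertices. There are about `(n / k) ^ k` choices of hubs, and each is
determined by the symmetry (`2 n` possibilities) and the images of the hubs, so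
`(n / k) ^ k ≲ 2 n |D| ^ k`. Since `|D| (n / k) ≲ 2 |E|` by double counting, taking `k`-th roots
gives `|E| ≳ n ^ (2 - 1 / k) / k ^ 2`.
-/

open Finset

section Counting

/-- The degree of the vertex `v` in the graph with edge set `E`, the quantity double counted
against `#E`. Loops are allowed and count once. -/
def chordDegree {V : Type*} [DecidableEq V] (E : Finset (Sym2 V)) (v : V) : ℕ :=
  #{d ∈ E | v ∈ d}

variable {V W : Type*} [DecidableEq V] [DecidableEq W]

lemma card_le_chordDegree {α : Type*} {E : Finset (Sym2 V)} {v : V} {s : Finset α} {f : α → V}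
    (hf : Set.InjOn f s) (h : ∀ x ∈ s, s(v, f x) ∈ E) : #s ≤ chordDegree E v :=
  card_le_card_of_injOn (fun x => s(v, f x)) (fun x hx => by simpa using h x hx)
    fun _ hx _ hy hxy => hf hx hy (Sym2.congr_right.1 hxy)

lemma chordDegree_le_chordDegree_map {σ : V → W} (hσ : Function.Injective σ)
    {T : Finset (Sym2 V)} {E : Finset (Sym2 W)} (h : ∀ d ∈ T, Sym2.map σ d ∈ E) (v : V) :
    chordDegree T v ≤ chordDegree E (σ v) := by
  refine card_le_card_of_injOn (Sym2.map σ) (fun d hd => ?_) (Sym2.map.injective hσ).injOn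
  obtain ⟨hdT, hvd⟩ := mem_filter.1 hd
  exact mem_filter.2 ⟨h d hdT, Sym2.mem_map.2 ⟨v, hvd, rfl⟩⟩

lemma card_filter_le_chordDegree_mul_le [Fintype V] (E : Finset (Sym2 V)) (r : ℕ) :
    #{v | r ≤ chordDegree E v} * r ≤ #E * 2 := by
  refine card_mul_le_card_mul (fun v d => v ∈ d) (fun v hv => (mem_filter.1 hv).2) fun d _ => ?_
  induction d with | _ a b =>
  refine (card_le_card fun v hv => ?_).trans (card_le_two (a := a) (b := b))
  simpa using (mem_filter.1 hv).2

/-- Each choice of points `x i ∈ A i` is determined by a map `f σ` carrying all of them into `D`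
together with their images. -/
lemma prod_card_le_card_mul_card_pow {ι α β γ : Type*} [Fintype ι]
    {A : ι → Finset α} {D : Finset β} {Φ : Finset γ} {f : γ → α → β}
    (hinj : ∀ σ ∈ Φ, ∀ i, Set.InjOn (f σ) (A i))
    (h : ∀ x : ι → α, (∀ i, x i ∈ A i) → ∃ σ ∈ Φ, ∀ i, f σ (x i) ∈ D) :
    ∏ i, #(A i) ≤ #Φ * #D ^ Fintype.card ι := by
  classical
  have hcover : Fintype.piFinset A ⊆
      Φ.biUnion fun σ => Fintype.piFinset fun i => {a ∈ A i | f σ a ∈ D} := by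
    intro x hx
    rw [Fintype.mem_piFinset] at hx
    obtain ⟨σ, hσ, hD⟩ := h x hx
    exact mem_biUnion.2
      ⟨σ, hσ, Fintype.mem_piFinset.2 fun i => mem_filter.2 ⟨hx i, hD i⟩⟩
  rw [← Fintype.card_piFinset]
  refine (card_le_card hcover).trans (card_biUnion_le_card_mul _ _ _ fun σ hσ => ?_)
  rw [Fintype.card_piFinset, ← card_univ, ← prod_const]
  refine prod_le_prod' fun i _ => card_le_card_of_injOn (f σ) (fun a ha => ?_) ?_
  · exact (mem_filter.1 ha).2
  · exact (hinj σ hσ i).mono fun a ha => (mem_filter.1 ha).1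

end Counting

/-- `IsIntervalTriangulation a b S`: `S` is the set of chords `(x, y)`, `x + 2 ≤ y`, of a
triangulation of the polygon with consecutive vertices `a, a + 1, …, b`. The base side `(a, b)` is
counted among the chords (unless `b = a + 1`), so that triangulations of adjacent intervals can be
glued along their bases to the triangle `a, m, b`. -/
inductive IsIntervalTriangulation : ℕ → ℕ → Finset (ℕ × ℕ) → Prop
  | edge (a : ℕ) : IsIntervalTriangulation a (a + 1) ∅
  | glue {a m b : ℕ} {S S' : Finset (ℕ × ℕ)} :
      IsIntervalTriangulation a m S → IsIntervalTriangulation m b S' →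
        IsIntervalTriangulation a b (insert (a, b) (S ∪ S'))

namespace IsIntervalTriangulation

variable {a b : ℕ} {S : Finset (ℕ × ℕ)}

lemma lt (h : IsIntervalTriangulation a b S) : a < b := by
  induction h <;> omega

lemma bounds (h : IsIntervalTriangulation a b S) :
    ∀ p ∈ S, a ≤ p.1 ∧ p.1 + 2 ≤ p.2 ∧ p.2 ≤ b := by
  induction h with
  | edge => simp
  | glue hS hS' ihS ihS' =>
    have := hS.lt
    have := hS'.lt
    grind

lemma base_mem (h : IsIntervalTriangulation a b S) (hab : a + 2 ≤ b) : (a, b) ∈ S := by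
  cases h with
  | edge => omega
  | glue => exact mem_insert_self _ _

lemma card_add (h : IsIntervalTriangulation a b S) : #S + a + 1 = b := by
  induction h with
  | edge => simp
  | @glue a m b S S' hS hS' ihS ihS' =>
    have := hS'.lt
    have hdisj : Disjoint S S' := by
      rw [disjoint_left]
      intro p hp hp'
      have := hS.bounds p hp
      have := hS'.bounds p hp'
      omega
    have hbase : (a, b) ∉ S ∪ S' := by
      rw [mem_union]
      rintro (hp | hp)
      · have := (hS.bounds _ hp).2.2
        omega
      · have := (hS'.bounds _ hp).1
        omega
    rw [card_insert_of_notMem hbase, card_union_of_disjoint hdisj]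
    omega

lemma noncrossing (h : IsIntervalTriangulation a b S) :
    ∀ p ∈ S, ∀ q ∈ S, ¬ (p.1 < q.1 ∧ q.1 < p.2 ∧ p.2 < q.2) := by
  induction h with
  | edge => simp
  | @glue a m b S S' hS hS' ihS ihS' =>
    have hleft : ∀ p ∈ S, a ≤ p.1 ∧ p.2 ≤ m := fun p hp =>
      ⟨(hS.bounds p hp).1, (hS.bounds p hp).2.2⟩
    have hright : ∀ p ∈ S', m ≤ p.1 ∧ p.2 ≤ b := fun p hp =>
      ⟨(hS'.bounds p hp).1, (hS'.bounds p hp).2.2⟩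
    have := hS.lt
    have := hS'.lt
    grind

end IsIntervalTriangulation

/-- The vertex `h` is a hub of the interval `[a, b]`: it is joined in `S` to every vertex of
`[a, b]` other than itself and its neighbours `h - 1` and `h + 1`, so its degree is large. -/
def IsHub (S : Finset (ℕ × ℕ)) (a b h : ℕ) : Prop :=
  ∀ y, a ≤ y → y ≤ b → (y + 2 ≤ h → (y, h) ∈ S) ∧ (h + 2 ≤ y → (h, y) ∈ S)

lemma IsHub.mono {S S' : Finset (ℕ × ℕ)} {a b h : ℕ} (hS : IsHub S a b h) (hSS' : S ⊆ S') :
    IsHub S' a b h :=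
  fun y hay hyb => ⟨fun hy => hSS' ((hS y hay hyb).1 hy), fun hy => hSS' ((hS y hay hyb).2 hy)⟩

lemma exists_isIntervalTriangulation_isHub_right {a h : ℕ} (hah : a < h) :
    ∃ S, IsIntervalTriangulation a h S ∧ IsHub S a h h := by
  obtain ⟨h, rfl⟩ := Nat.exists_eq_succ_of_ne_zero (Nat.ne_zero_of_lt hah)
  induction Nat.le_of_lt_succ hah using Nat.decreasingInduction with
  | self => exact ⟨∅, .edge h, fun y _ _ => by omega⟩
  | of_succ a hah' ih =>
    obtain ⟨S, hS, hub⟩ := ih (by omega)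
    refine ⟨_, .glue (.edge a) hS, fun y hay hyb => ?_⟩
    have := hub y
    grind

lemma exists_isIntervalTriangulation_isHub_left {h b : ℕ} (hhb : h < b) :
    ∃ S, IsIntervalTriangulation h b S ∧ IsHub S h b h := by
  induction b, hhb using Nat.le_induction with
  | base => exact ⟨∅, .edge h, fun y _ _ => by omega⟩
  | succ b _ ih =>
    obtain ⟨S, hS, hub⟩ := ih
    refine ⟨_, .glue hS (.edge b), fun y hay hyb => ?_⟩
    have := hub y hay
    grind

lemma exists_isIntervalTriangulation_isHub {a h b : ℕ} (hah : a < h) (hhb : h < b) :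
    ∃ S, IsIntervalTriangulation a b S ∧ IsHub S a b h := by
  obtain ⟨S, hS, hub⟩ := exists_isIntervalTriangulation_isHub_right hah
  obtain ⟨S', hS', hub'⟩ := exists_isIntervalTriangulation_isHub_left hhb
  refine ⟨_, .glue hS hS', fun y hay hyb => ⟨fun hy => ?_, fun hy => ?_⟩⟩
  · simp [(hub y hay (by omega)).1 hy]
  · simp [(hub' y (by omega) hyb).2 hy]

lemma exists_isIntervalTriangulation_forall_isHub {c k : ℕ} {p : ℕ → ℕ} {h : Fin k → ℕ}
    (hc : c < p 0) (hh : ∀ i : Fin k, p i < h i ∧ h i < p (i + 1)) :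
    ∃ S, IsIntervalTriangulation c (p k) S ∧ ∀ i : Fin k, IsHub S (p i) (p (i + 1)) (h i) := by
  induction k with
  | zero =>
    obtain ⟨S, hS, -⟩ := exists_isIntervalTriangulation_isHub_left hc
    exact ⟨S, hS, fun i => i.elim0⟩
  | succ k ih =>
    obtain ⟨S, hS, hub⟩ := ih (h := fun i => h i.castSucc) fun i => hh i.castSucc
    obtain ⟨hlast, hlast'⟩ := hh (Fin.last k)
    obtain ⟨S', hS', hub'⟩ := exists_isIntervalTriangulation_isHub hlast hlast'
    refine ⟨_, .glue hS hS', Fin.lastCases ?_ fun i => ?_⟩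
    · exact hub'.mono (subset_union_right.trans (subset_insert _ _))
    · exact (hub i).mono (subset_union_left.trans (subset_insert _ _))

section Transport

variable {n : ℕ}

lemma val_natCast_sub_natCast {x y : ℕ} (hx : x < n) (hy : y < n) :
    ((y : ZMod n) - (x : ZMod n)).val = if x ≤ y then y - x else n + y - x := by
  split_ifs with hxy
  · rw [← Nat.cast_sub hxy, ZMod.val_natCast_of_lt (by omega)]
  · have : (y : ZMod n) - (x : ZMod n) = ((n + y - x : ℕ) : ZMod n) := by
      rw [Nat.cast_sub (by omega)]
      simp
    rw [this, ZMod.val_natCast_of_lt (by omega)]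

lemma isDiagonal_mk_of_one_lt_val {a b : ZMod n} (hab : 1 < (b - a).val) (hba : 1 < (a - b).val) :
    IsDiagonal n s(a, b) := by
  have hone : (1 : ZMod n).val ≤ 1 := by
    rw [ZMod.val_one_eq_one_mod]
    exact Nat.mod_le 1 n
  refine ⟨a, b, rfl, ?_, ?_, ?_⟩ <;> rintro rfl
  · rw [sub_sub_cancel] at hba
    omega
  · simp at hab
  · rw [add_sub_cancel_left] at hab
    omega

lemma isDiagonal_natCast {x y : ℕ} (hxy : x + 2 ≤ y) (hy : y < n) (hne : (x, y) ≠ (0, n - 1)) :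
    IsDiagonal n s((x : ZMod n), (y : ZMod n)) := by
  have hx : x < n := by omega
  rw [Ne, Prod.mk.injEq] at hne
  apply isDiagonal_mk_of_one_lt_val
  · rw [val_natCast_sub_natCast hx hy]
    split_ifs <;> omega
  · rw [val_natCast_sub_natCast hy hx]
    split_ifs <;> omega

lemma not_crosses_natCast {a b c d : ℕ} (hab : a < b) (hb : b < n) (hcd : c < d) (hd : d < n)
    (hacbd : ¬ (a < c ∧ c < b ∧ b < d)) (hcadb : ¬ (c < a ∧ a < d ∧ d < b)) :
    ¬ Crosses n s((a : ZMod n), (b : ZMod n)) s((c : ZMod n), (d : ZMod n)) := by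
  have ha : a < n := by omega
  have hc : c < n := by omega
  rintro ⟨a', b', c', d', hab', hcd', hbtw, hbtw'⟩
  rw [Sym2.eq_iff] at hab' hcd'
  unfold BtwArc at hbtw hbtw'
  rcases hab' with ⟨rfl, rfl⟩ | ⟨rfl, rfl⟩ <;> rcases hcd' with ⟨rfl, rfl⟩ | ⟨rfl, rfl⟩ <;>
    simp only [val_natCast_sub_natCast, ha, hb, hc, hd] at hbtw hbtw' <;>
    split_ifs at hbtw hbtw' <;> omega

/-- The diagonals of the `n`-gon given by a set of chords of the interval `[0, n - 1]`; the chord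
`(0, n - 1)` is removed since it is a side of the `n`-gon. -/
def toDiagonals (n : ℕ) (S : Finset (ℕ × ℕ)) : Finset (Sym2 (ZMod n)) :=
  (S.erase (0, n - 1)).image fun p => s((p.1 : ZMod n), (p.2 : ZMod n))

lemma natCast_mem_toDiagonals {S : Finset (ℕ × ℕ)} {x y : ℕ} (hS : (x, y) ∈ S) (hx : 0 < x) :
    s((x : ZMod n), (y : ZMod n)) ∈ toDiagonals n S :=
  mem_image.2 ⟨(x, y), mem_erase.2 ⟨by simp [hx.ne'], hS⟩, rfl⟩

lemma IsIntervalTriangulation.card_toDiagonals {S : Finset (ℕ × ℕ)} (hn : 3 ≤ n)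
    (hS : IsIntervalTriangulation 0 (n - 1) S) : #(toDiagonals n S) = n - 3 := by
  have hinj : Set.InjOn (fun p : ℕ × ℕ => s((p.1 : ZMod n), (p.2 : ZMod n)))
      (S.erase (0, n - 1)) := by
    intro p hp q hq hpq
    replace hp := hS.bounds p (mem_of_mem_erase hp)
    replace hq := hS.bounds q (mem_of_mem_erase hq)
    have hcast {x y : ℕ} (hx : x ≤ n - 1) (hy : y ≤ n - 1) : (x : ZMod n) = y → x = y :=
      fun hxy => CharP.natCast_injOn_Iio (ZMod n) n (by grind) (by grind) hxy
    rcases Sym2.eq_iff.1 hpq with ⟨h1, h2⟩ | ⟨h1, h2⟩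
    · exact Prod.ext (hcast (by omega) (by omega) h1) (hcast (by omega) (by omega) h2)
    · have := hcast (by omega) (by omega) h1
      have := hcast (by omega) (by omega) h2
      omega
  rw [toDiagonals, card_image_of_injOn hinj, card_erase_of_mem (hS.base_mem (by omega))]
  have := hS.card_add
  omega

lemma IsIntervalTriangulation.isPolygonTriangulation {S : Finset (ℕ × ℕ)} (hn : 3 ≤ n)
    (hS : IsIntervalTriangulation 0 (n - 1) S) : IsPolygonTriangulation n (toDiagonals n S) := by
  refine ⟨hS.card_toDiagonals hn, fun d hd => ?_, fun d hd d' hd' => ?_⟩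
  · obtain ⟨p, hp, rfl⟩ := mem_image.1 hd
    obtain ⟨hne, hp⟩ := mem_erase.1 hp
    have := hS.bounds p hp
    exact isDiagonal_natCast (by omega) (by omega) hne
  · obtain ⟨p, hp, rfl⟩ := mem_image.1 hd
    obtain ⟨q, hq, rfl⟩ := mem_image.1 hd'
    replace hp := mem_of_mem_erase hp
    replace hq := mem_of_mem_erase hq
    have := hS.bounds p hp
    have := hS.bounds q hq
    exact not_crosses_natCast (by omega) (by omega) (by omega) (by omega)
      (hS.noncrossing p hp q hq) (hS.noncrossing q hq p hp)

lemma IsHub.le_add_chordDegree {S : Finset (ℕ × ℕ)} {a b h : ℕ} (hS : IsHub S a b h) (ha : 0 < a)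
    (hh : 0 < h) (hb : b < n) : b ≤ a + chordDegree (toDiagonals n S) (h : ZMod n) + 2 := by
  let N : Finset ℕ := Icc a b \ {h - 1, h, h + 1}
  have hmem : ∀ y ∈ N, s((h : ZMod n), (y : ZMod n)) ∈ toDiagonals n S := by
    intro y hy
    obtain ⟨⟨hay, hyb⟩, hyh⟩ : (a ≤ y ∧ y ≤ b) ∧ ¬ (y = h - 1 ∨ y = h ∨ y = h + 1) := by
      simpa [N] using hy
    obtain hlt | hgt : y + 2 ≤ h ∨ h + 2 ≤ y := by omega
    · rw [Sym2.eq_swap]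
      exact natCast_mem_toDiagonals ((hS y hay hyb).1 hlt) (by omega)
    · exact natCast_mem_toDiagonals ((hS y hay hyb).2 hgt) hh
  have hinj : Set.InjOn (Nat.cast : ℕ → ZMod n) N :=
    (CharP.natCast_injOn_Iio (ZMod n) n).mono fun y hy => by grind
  have hdeg : #N ≤ chordDegree (toDiagonals n S) (h : ZMod n) := card_le_chordDegree hinj hmem
  have hcard : #(Icc a b) - #{h - 1, h, h + 1} ≤ #N := le_card_sdiff _ _
  have hthree : #{h - 1, h, h + 1} ≤ 3 := card_le_three
  rw [Nat.card_Icc] at hcard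
  omega

lemma exists_isPolygonTriangulation_forall_le_add_chordDegree {k : ℕ} {p : ℕ → ℕ}
    (hp : Monotone p) (hp0 : 0 < p 0) (hpk : p k + 1 < n) {h : Fin k → ℕ}
    (hh : ∀ i : Fin k, p i < h i ∧ h i < p (i + 1)) :
    ∃ T, IsPolygonTriangulation n T ∧
      ∀ i : Fin k, p (i + 1) ≤ p i + chordDegree T (h i : ZMod n) + 2 := by
  obtain ⟨S, hS, hub⟩ := exists_isIntervalTriangulation_forall_isHub hp0 hh
  obtain ⟨S', hS', -⟩ := exists_isIntervalTriangulation_isHub_left (h := p k) (b := n - 1)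
    (by omega)
  have hp0k : p 0 ≤ p k := hp (Nat.zero_le k)
  refine ⟨_, (hS.glue hS').isPolygonTriangulation (by omega), fun i => ?_⟩
  have hpi : p 0 ≤ p i := hp (Nat.zero_le _)
  have hpik : p (i + 1) ≤ p k := hp i.2
  have := (hh i).1
  exact ((hub i).mono (subset_union_left.trans (subset_insert _ _))).le_add_chordDegree
    (by omega) (by omega) (by omega)

end Transport

lemma IsDihedralSymmetry.injective {n : ℕ} {σ : ZMod n → ZMod n} (hσ : IsDihedralSymmetry n σ) :
    Function.Injective σ := by
  rcases hσ with ⟨t, rfl⟩ | ⟨t, rfl⟩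
  · exact add_left_injective t
  · exact sub_right_injective

open Classical in
lemma card_filter_isDihedralSymmetry_le (n : ℕ) [NeZero n] :
    #{σ : ZMod n → ZMod n | IsDihedralSymmetry n σ} ≤ 2 * n := by
  have hsub : ({σ | IsDihedralSymmetry n σ} : Finset (ZMod n → ZMod n)) ⊆
      univ.image (fun t x => x + t) ∪ univ.image (fun t x => t - x) := by
    intro σ hσ
    rcases (mem_filter.1 hσ).2 with ⟨t, rfl⟩ | ⟨t, rfl⟩ <;> simp
  calc #{σ : ZMod n → ZMod n | IsDihedralSymmetry n σ}
      ≤ #(univ.image fun t x : ZMod n => x + t) + #(univ.image fun t x : ZMod n => t - x) :=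
        (card_le_card hsub).trans (card_union_le _ _)
    _ ≤ n + n := by gcongr <;> exact card_image_le.trans_eq (ZMod.card n)
    _ = 2 * n := (two_mul n).symm

/-- `E` realizes all types of triangulations of the `n`-gon with unlabelled vertices: it contains a
dihedral image of each of them. -/
def IsTriangulationUniversal (n : ℕ) (E : Finset (Sym2 (ZMod n))) : Prop :=
  ∀ T : Finset (Sym2 (ZMod n)), IsPolygonTriangulation n T →
    ∃ σ : ZMod n → ZMod n, IsDihedralSymmetry n σ ∧ ∀ d ∈ T, Sym2.map σ d ∈ E

namespace IsTriangulationUniversal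

variable {n k : ℕ} {E : Finset (Sym2 (ZMod n))}

lemma card_pos (hE : IsTriangulationUniversal n E) (hn : 4 ≤ n) : 0 < #E := by
  obtain ⟨S, hS, -⟩ := exists_isIntervalTriangulation_isHub_left (h := 0) (b := n - 1) (by omega)
  obtain ⟨σ, -, hσ⟩ := hE _ (hS.isPolygonTriangulation (by omega))
  obtain ⟨d, hd⟩ : (toDiagonals n S).Nonempty := by
    rw [← Finset.card_pos, hS.card_toDiagonals (by omega)]
    omega
  exact Finset.card_pos.2 ⟨_, hσ d hd⟩

lemma exists_isDihedralSymmetry_forall_le_add_chordDegree (hE : IsTriangulationUniversal n E)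
    {p : ℕ → ℕ} (hp : Monotone p) (hp0 : 0 < p 0) (hpk : p k + 1 < n) {h : Fin k → ℕ}
    (hh : ∀ i : Fin k, p i < h i ∧ h i < p (i + 1)) :
    ∃ σ, IsDihedralSymmetry n σ ∧
      ∀ i : Fin k, p (i + 1) ≤ p i + chordDegree E (σ (h i)) + 2 := by
  obtain ⟨T, hT, hdeg⟩ := exists_isPolygonTriangulation_forall_le_add_chordDegree hp hp0 hpk hh
  obtain ⟨σ, hσ, hTE⟩ := hE T hT
  refine ⟨σ, hσ, fun i => (hdeg i).trans ?_⟩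
  gcongr
  exact chordDegree_le_chordDegree_map hσ.injective hTE _

lemma succ_pow_le_two_mul_mul_card_pow [NeZero n] (hE : IsTriangulationUniversal n E) {r : ℕ}
    (hn : k * (r + 2) + 3 ≤ n) :
    (r + 1) ^ k ≤ 2 * n * #{v | r ≤ chordDegree E v} ^ k := by
  classical
  let p : ℕ → ℕ := fun i => 1 + i * (r + 2)
  have hp : Monotone p := fun i j hij => by dsimp only [p]; gcongr
  have hpk : p k + 1 < n := by dsimp only [p]; omega
  have hp_succ (i : ℕ) : p (i + 1) = p i + (r + 2) := by dsimp only [p]; ring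
  have hcount : ∏ i : Fin k, #(Ioo (p i) (p (i + 1))) ≤
      #{σ : ZMod n → ZMod n | IsDihedralSymmetry n σ} *
        #{v | r ≤ chordDegree E v} ^ Fintype.card (Fin k) := by
    refine prod_card_le_card_mul_card_pow (f := fun σ (y : ℕ) => σ y) (fun σ hσ i => ?_)
      fun h hh => ?_
    · refine (mem_filter.1 hσ).2.injective.comp_injOn
        ((CharP.natCast_injOn_Iio (ZMod n) n).mono fun y hy => ?_)
      have hpik : p (i + 1) ≤ p k := hp i.2
      grind
    · obtain ⟨σ, hσ, hdeg⟩ := hE.exists_isDihedralSymmetry_forall_le_add_chordDegree hp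
        (by simp [p]) hpk fun i => mem_Ioo.1 (hh i)
      refine ⟨σ, by simpa using hσ, fun i => ?_⟩
      have := hdeg i
      rw [hp_succ] at this
      simp only [mem_filter_univ]
      omega
  have hcard (i : ℕ) : #(Ioo (p i) (p (i + 1))) = r + 1 := by
    rw [Nat.card_Ioo, hp_succ]
    omega
  simp only [hcard, prod_const, card_univ, Fintype.card_fin] at hcount
  exact hcount.trans (Nat.mul_le_mul_right _ (card_filter_isDihedralSymmetry_le n))

lemma pow_two_mul_le_two_mul_mul_pow (hE : IsTriangulationUniversal n E) {r : ℕ}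
    (hn : k * (r + 2) + 3 ≤ n) : r ^ (2 * k) ≤ 2 * n * (2 * #E) ^ k := by
  have : NeZero n := ⟨by omega⟩
  calc r ^ (2 * k) = r ^ k * r ^ k := by rw [two_mul, pow_add]
    _ ≤ (r + 1) ^ k * r ^ k := by gcongr; omega
    _ ≤ 2 * n * #{v | r ≤ chordDegree E v} ^ k * r ^ k := by
      gcongr
      exact hE.succ_pow_le_two_mul_mul_card_pow hn
    _ = 2 * n * (#{v | r ≤ chordDegree E v} * r) ^ k := by rw [mul_pow, mul_assoc]
    _ ≤ 2 * n * (2 * #E) ^ k := by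
      rw [mul_comm 2 #E]
      exact Nat.mul_le_mul_left _
        (Nat.pow_le_pow_left (card_filter_le_chordDegree_mul_le E r) k)

lemma pow_two_mul_le_mul_pow_of_le (hE : IsTriangulationUniversal n E) (hk : 0 < k)
    (hn : 12 * k ≤ n) : n ^ (2 * k) ≤ n * (16 * k ^ 2 * #E) ^ k := by
  let r := n / (2 * k) + 1
  have hlt : n < 2 * k * r := Nat.lt_mul_div_succ n (by omega)
  have hle : k * (r + 2) + 3 ≤ n := by
    have : 2 * k * (n / (2 * k)) ≤ n := Nat.mul_div_le _ _
    have : 2 * (k * (r + 2)) = 2 * k * (n / (2 * k)) + 6 * k := by dsimp only [r]; ring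
    omega
  calc n ^ (2 * k) ≤ (2 * k * r) ^ (2 * k) := by gcongr
    _ = (2 * k) ^ (2 * k) * r ^ (2 * k) := mul_pow _ _ _
    _ ≤ (2 * k) ^ (2 * k) * (2 * n * (2 * #E) ^ k) := by
      gcongr
      exact hE.pow_two_mul_le_two_mul_mul_pow hle
    _ ≤ (2 * k) ^ (2 * k) * (2 ^ k * n * (2 * #E) ^ k) := by
      gcongr
      exact Nat.le_self_pow hk.ne' 2
    _ = n * ((2 * k) ^ 2 * 2 * (2 * #E)) ^ k := by
      rw [mul_pow _ (2 * #E), mul_pow _ 2, ← pow_mul (2 * k)]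
      ring
    _ = n * (16 * k ^ 2 * #E) ^ k := by ring

lemma pow_two_mul_le_mul_pow (hE : IsTriangulationUniversal n E) (hn : 4 ≤ n) (hk : 0 < k) :
    n ^ (2 * k) ≤ n * (144 * k ^ 2 * #E) ^ k := by
  -- For `n ≤ 12 * k` it is enough that `E` is nonempty; hence the constant `144 = 12 ^ 2`.
  rcases le_total n (12 * k) with hsmall | hlarge
  · have := hE.card_pos hn
    calc n ^ (2 * k) ≤ (12 * k) ^ (2 * k) := by gcongr
      _ = 1 * (144 * k ^ 2 * 1) ^ k := by rw [pow_mul]; ring_nf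
      _ ≤ n * (144 * k ^ 2 * #E) ^ k := by gcongr <;> omega
  · calc n ^ (2 * k) ≤ n * (16 * k ^ 2 * #E) ^ k := hE.pow_two_mul_le_mul_pow_of_le hk hlarge
      _ ≤ n * (144 * k ^ 2 * #E) ^ k := by gcongr; omega

lemma rpow_two_sub_one_div_le (hE : IsTriangulationUniversal n E) (hn : 4 ≤ n) (hk : 0 < k) :
    (n : ℝ) ^ (2 - 1 / (k : ℝ)) ≤ 144 * (k : ℝ) ^ 2 * #E := by
  have hn0 : (0 : ℝ) < n := by exact_mod_cast (by omega : 0 < n)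
  refine le_of_pow_le_pow_left₀ hk.ne' (by positivity) ?_
  calc ((n : ℝ) ^ (2 - 1 / (k : ℝ))) ^ k = (n : ℝ) ^ (2 * k) / n := by
        rw [← Real.rpow_mul_natCast hn0.le, sub_mul, one_div_mul_cancel (by positivity),
          Real.rpow_sub_one hn0.ne']
        exact_mod_cast rfl
    _ ≤ (144 * (k : ℝ) ^ 2 * #E) ^ k := by
        rw [div_le_iff₀' hn0]
        exact_mod_cast hE.pow_two_mul_le_mul_pow hn hk

end IsTriangulationUniversal

/-- For every `ε > 0` there is `c > 0` such that for all `n ≥ 4`, any family `E` of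
diagonals of the `n`-gon containing a dihedral image of every triangulation of the
`n`-gon has at least `c * n^(2 - ε)` elements. -/
theorem universal_triangulations_lower_bound :
    ∀ ε : ℝ, 0 < ε → ∃ c : ℝ, 0 < c ∧ ∀ n : ℕ, 4 ≤ n →
      ∀ E : Finset (Sym2 (ZMod n)),
        (∀ d ∈ E, IsDiagonal n d) →
        (∀ T : Finset (Sym2 (ZMod n)), IsPolygonTriangulation n T →
          ∃ σ : ZMod n → ZMod n, IsDihedralSymmetry n σ ∧ ∀ d ∈ T, Sym2.map σ d ∈ E) →
        c * (n : ℝ) ^ ((2 : ℝ) - ε) ≤ (E.card : ℝ) := by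
  intro ε hε
  obtain ⟨j, hj⟩ := exists_nat_one_div_lt hε
  obtain ⟨k, hk, hkε⟩ : ∃ k : ℕ, 0 < k ∧ (1 : ℝ) / k ≤ ε :=
    ⟨j + 1, j.succ_pos, by exact_mod_cast hj.le⟩
  refine ⟨1 / (144 * (k : ℝ) ^ 2), by positivity, fun n hn E _ hE => ?_⟩
  rw [one_div, inv_mul_le_iff₀ (by positivity)]
  calc (n : ℝ) ^ (2 - ε) ≤ (n : ℝ) ^ (2 - 1 / (k : ℝ)) :=
        Real.rpow_le_rpow_of_exponent_le (by exact_mod_cast (by omega : 1 ≤ n)) (by linarith)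
    _ ≤ 144 * (k : ℝ) ^ 2 * #E := IsTriangulationUniversal.rpow_two_sub_one_div_le hE hn hk
end

section
/- For all integers n and i with 2 ≤ i and 3·i ≤ n, there exists a finite simple graph G that is a tree, in which every vertex has degree 1 or degree 3, which has exactly n vertices of degree 1, and which has at least ⌊n/i⌋ distinct edges e such that one of the two connected components obtained by deleting e from G contains exactly i vertices of degree 1 of G. -/
/-!
Cutting `i` leaves at a time off a pool of `n - i` leaves and joining the resulting subtrees along
a spine gives a full binary tree with `n - i` leaves and at least `(n - i) / i = n / i - 1` subtrees
with exactly `i` leaves. Extend the spine upwards by `i - 1` more leaves and plant the whole tree on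
a root leaf. Now the edge above the subtree with `n - i` leaves has exactly `i` leaves on the root's
side, and it differs from the previous edges because `n - i ≠ i`.
-/

section ParentGraph

variable {V : Type*} {p : V → Option V}

/-- The edge from the vertex `v` up to its parent `p v`. -/
def parentEdge (p : V → Option V) (v : V) : Sym2 (Option V) :=
  s(some v, p v)

/-- The graph of a parent function. The additional vertex `none` is the root, so `p v = none` says
that `v` is joined to the root. -/
def parentGraph (p : V → Option V) : SimpleGraph (Option V) :=
  SimpleGraph.fromEdgeSet (Set.range (parentEdge p))

/-- The vertices whose upward path passes through `v`, among them `v` itself. -/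
def descendants (p : V → Option V) (v : V) : Set (Option V) :=
  some '' {u | Relation.ReflTransGen (fun a b => p a = some b) u v}

lemma parentEdge_injective (hp : WellFounded fun u v => p v = some u) :
    Function.Injective (parentEdge p) := by
  intro u v huv
  rcases Sym2.eq_iff.1 huv with ⟨h, -⟩ | ⟨hu, hv⟩
  · exact Option.some_injective _ h
  · exact absurd hu.symm (hp.asymmetric _ _ hv)

lemma parentGraph_edgeSet (hp : WellFounded fun u v => p v = some u) :
    (parentGraph p).edgeSet = Set.range (parentEdge p) := by
  rw [parentGraph, SimpleGraph.edgeSet_fromEdgeSet, sdiff_eq_left, Set.disjoint_left]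
  rintro _ ⟨v, rfl⟩ hv
  exact hp.irrefl.irrefl v hv.symm

lemma parentGraph_adj_parent (hp : WellFounded fun u v => p v = some u) (v : V) :
    (parentGraph p).Adj (some v) (p v) := by
  rw [← SimpleGraph.mem_edgeSet, parentGraph_edgeSet hp]
  exact ⟨v, rfl⟩

lemma parentGraph_adj_iff (hp : WellFounded fun u v => p v = some u) {a b : Option V} :
    (parentGraph p).Adj a b ↔ ∃ v, a = some v ∧ p v = b ∨ b = some v ∧ p v = a := by
  rw [← SimpleGraph.mem_edgeSet, parentGraph_edgeSet hp]
  simp only [Set.mem_range, parentEdge, Sym2.eq_iff]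
  grind

lemma parentGraph_isTree [Finite V] (hp : WellFounded fun u v => p v = some u) :
    (parentGraph p).IsTree := by
  rw [SimpleGraph.isTree_iff_connected_and_card]
  constructor
  · have reachable_root (a : Option V) : (parentGraph p).Reachable a none := by
      cases a with
      | none => rfl
      | some v =>
        induction v using hp.induction with
        | _ v ih =>
          refine (parentGraph_adj_parent hp v).reachable.trans ?_
          cases h : p v with
          | none => rfl
          | some u => exact ih u h
    exact ⟨fun a b => (reachable_root a).trans (reachable_root b).symm⟩
  · rw [parentGraph_edgeSet hp, Nat.card_range_of_injective (parentEdge_injective hp),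
      Finite.card_option]

lemma parentGraph_neighborSet_none (hp : WellFounded fun u v => p v = some u) :
    (parentGraph p).neighborSet none = some '' {u | p u = none} := by
  ext a
  simp [parentGraph_adj_iff hp, and_comm, eq_comm]

lemma parentGraph_neighborSet_some (hp : WellFounded fun u v => p v = some u) (v : V) :
    (parentGraph p).neighborSet (some v) = insert (p v) (some '' {u | p u = some v}) := by
  ext a
  simp only [SimpleGraph.mem_neighborSet, parentGraph_adj_iff hp, Set.mem_insert_iff,
    Set.mem_image, Set.mem_ofPred_eq]
  grind

lemma parentGraph_ncard_neighborSet_none (hp : WellFounded fun u v => p v = some u) :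
    ((parentGraph p).neighborSet none).ncard = {u | p u = none}.ncard := by
  rw [parentGraph_neighborSet_none hp, Set.ncard_image_of_injective _ (Option.some_injective V)]

lemma parentGraph_ncard_neighborSet_some [Finite V] (hp : WellFounded fun u v => p v = some u)
    (v : V) :
    ((parentGraph p).neighborSet (some v)).ncard = {u | p u = some v}.ncard + 1 := by
  rw [parentGraph_neighborSet_some hp, Set.ncard_insert_of_notMem,
    Set.ncard_image_of_injective _ (Option.some_injective V)]
  rintro ⟨u, hu, huv⟩
  exact hp.asymmetric _ _ hu huv.symm

lemma some_mem_descendants_iff_of_ne {u v : V} (huv : u ≠ v) :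
    some u ∈ descendants p v ↔ p u ∈ descendants p v := by
  simp only [descendants, Set.mem_image, Set.mem_ofPred_eq, Option.some.injEq, exists_eq_right]
  constructor
  · intro h
    obtain rfl | ⟨w, huw, hwv⟩ := h.cases_head
    · exact absurd rfl huv
    · exact ⟨w, hwv, huw.symm⟩
  · rintro ⟨w, hwv, huw⟩
    exact .head huw.symm hwv

lemma mem_descendants_iff_of_reachable (hp : WellFounded fun u v => p v = some u) {v : V}
    {a b : Option V} (hab : ((parentGraph p).deleteEdges {parentEdge p v}).Reachable a b) :
    a ∈ descendants p v ↔ b ∈ descendants p v := by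
  rw [SimpleGraph.reachable_iff_reflTransGen] at hab
  induction hab with
  | refl => rfl
  | @tail b c _ hbc ih =>
    rw [SimpleGraph.deleteEdges_adj, parentGraph_adj_iff hp] at hbc
    obtain ⟨⟨u, ⟨rfl, rfl⟩ | ⟨rfl, rfl⟩⟩, hne⟩ := hbc
    · exact ih.trans (some_mem_descendants_iff_of_ne fun h => hne (h ▸ rfl))
    · refine ih.trans (some_mem_descendants_iff_of_ne fun h => hne ?_).symm
      exact h ▸ Sym2.eq_swap

lemma reachable_parent_of_ne (hp : WellFounded fun u v => p v = some u) {u v : V} (huv : u ≠ v) :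
    ((parentGraph p).deleteEdges {parentEdge p v}).Reachable (some u) (p u) := by
  refine SimpleGraph.Adj.reachable ?_
  rw [SimpleGraph.deleteEdges_adj]
  exact ⟨parentGraph_adj_parent hp u, (parentEdge_injective hp).ne huv⟩

lemma reachable_some_iff_mem_descendants (hp : WellFounded fun u v => p v = some u) {v : V}
    {a : Option V} :
    ((parentGraph p).deleteEdges {parentEdge p v}).Reachable a (some v) ↔ a ∈ descendants p v := by
  refine ⟨fun h => (mem_descendants_iff_of_reachable hp h).2 ⟨v, .refl, rfl⟩, ?_⟩
  rintro ⟨u, huv, rfl⟩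
  induction huv using Relation.ReflTransGen.head_induction_on with
  | refl => rfl
  | @head u w huw _ ih =>
    obtain rfl | hne := eq_or_ne u v
    · rfl
    · have huw' := reachable_parent_of_ne hp hne
      rw [huw] at huw'
      exact huw'.trans ih

lemma reachable_none_iff_notMem_descendants (hp : WellFounded fun u v => p v = some u) {v : V}
    {a : Option V} :
    ((parentGraph p).deleteEdges {parentEdge p v}).Reachable a none ↔ a ∉ descendants p v := by
  refine ⟨fun h ha => by simpa [descendants] using (mem_descendants_iff_of_reachable hp h).1 ha, ?_⟩
  intro ha
  cases a with
  | none => rfl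
  | some u =>
    induction u using hp.induction with
    | _ u ih =>
      have hne : u ≠ v := by
        rintro rfl
        exact ha ⟨u, .refl, rfl⟩
      refine (reachable_parent_of_ne hp hne).trans ?_
      rw [some_mem_descendants_iff_of_ne hne] at ha
      cases h : p u with
      | none => rfl
      | some w => exact ih w h (h ▸ ha)

end ParentGraph

section Positions

variable {α : Type*}

/-- The left (`false`) or right (`true`) subtree of a binary tree that is not a leaf. -/
def childSubtree : Bool → BinaryTree α → Option (BinaryTree α)
  | _, .nil => none
  | false, .node _ l _ => some l
  | true, .node _ _ r => some r

/-- The subtree of `t` reached along a path of left and right turns. Paths are listed from the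
bottom up: the last turn is the head of the list. -/
def subtreeAt (t : BinaryTree α) : List Bool → Option (BinaryTree α)
  | [] => some t
  | b :: w => (subtreeAt t w).bind (childSubtree b)

/-- The positions of the nodes and leaves of a binary tree, encoded by their paths. -/
abbrev TreePosition (t : BinaryTree α) : Type :=
  {w : List Bool // (subtreeAt t w).isSome}

lemma subtreeAt_append {s t : BinaryTree α} {w : List Bool} (hw : subtreeAt t w = some s)
    (u : List Bool) : subtreeAt t (u ++ w) = subtreeAt s u := by
  induction u with
  | nil => exact hw
  | cons b u ih => simp only [List.cons_append, subtreeAt, ih]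

lemma height_add_length_le {s t : BinaryTree α} {w : List Bool} (hw : subtreeAt t w = some s) :
    s.height + w.length ≤ t.height := by
  induction w generalizing s with
  | nil => simp_all [subtreeAt]
  | cons b w ih =>
    obtain ⟨s', hs', hs⟩ := Option.bind_eq_some_iff.1 hw
    have height_child : s.height + 1 ≤ s'.height := by
      cases s' <;> cases b <;> simp_all [childSubtree]
    have height_parent := ih hs'
    rw [List.length_cons]
    omega

instance (t : BinaryTree α) : Finite (TreePosition t) :=
  (List.finite_length_le Bool t.height).subset fun w hw => by
    obtain ⟨s, hs⟩ := Option.isSome_iff_exists.1 hw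
    exact (Nat.le_add_left _ _).trans (height_add_length_le hs)

namespace TreePosition

variable {t : BinaryTree α}

/-- The subtree rooted at a position. -/
def subtree (x : TreePosition t) : BinaryTree α :=
  (subtreeAt t x.1).get x.2

/-- The position of `t` itself. -/
def top (t : BinaryTree α) : TreePosition t :=
  ⟨[], rfl⟩

/-- The position one step up; the top position has none. -/
def parent : TreePosition t → Option (TreePosition t)
  | ⟨[], _⟩ => none
  | ⟨_ :: w, hw⟩ => some ⟨w, Option.isSome_of_isSome_bind hw⟩

/-- The position of `t` corresponding to a position of the subtree reached along `w`. -/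
def lift {s : BinaryTree α} {w : List Bool} (hw : subtreeAt t w = some s) (y : TreePosition s) :
    TreePosition t :=
  ⟨y.1 ++ w, by rw [subtreeAt_append hw]; exact y.2⟩

lemma subtreeAt_val (x : TreePosition t) : subtreeAt t x.1 = some x.subtree :=
  (Option.some_get x.2).symm

lemma parent_eq_none_iff {x : TreePosition t} : x.parent = none ↔ x = top t := by
  obtain ⟨_ | ⟨b, w⟩, hw⟩ := x <;> simp [parent, top, Subtype.ext_iff]

lemma parent_eq_some_iff {x y : TreePosition t} : y.parent = some x ↔ ∃ b, y.1 = b :: x.1 := by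
  obtain ⟨_ | ⟨b, w⟩, hw⟩ := y <;> simp [parent, Subtype.ext_iff]

lemma parent_wellFounded : WellFounded fun x y : TreePosition t => y.parent = some x := by
  refine Subrelation.wf (fun {x y} h => ?_) (measure fun x : TreePosition t => x.1.length).wf
  obtain ⟨b, hb⟩ := parent_eq_some_iff.1 h
  change x.1.length < y.1.length
  simp only [hb, List.length_cons, Nat.lt_succ_self]

lemma ncard_setOf_parent_eq_none : {x : TreePosition t | x.parent = none}.ncard = 1 := by
  rw [Set.ncard_eq_one]
  exact ⟨top t, Set.ext fun _ => parent_eq_none_iff⟩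

lemma ncard_children_of_subtree_eq_nil {x : TreePosition t} (hx : x.subtree = .nil) :
    {y : TreePosition t | y.parent = some x}.ncard = 0 := by
  rw [Set.ncard_eq_zero, Set.eq_empty_iff_forall_notMem]
  rintro ⟨_, hy⟩ h
  obtain ⟨b, rfl⟩ := parent_eq_some_iff.1 h
  simp [subtreeAt, subtreeAt_val, hx, childSubtree] at hy

lemma ncard_children_of_subtree_ne_nil {x : TreePosition t} (hx : x.subtree ≠ .nil) :
    {y : TreePosition t | y.parent = some x}.ncard = 2 := by
  have isSome_cons (b : Bool) : (subtreeAt t (b :: x.1)).isSome := by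
    rw [subtreeAt, subtreeAt_val]
    cases h : x.subtree with
    | nil => exact absurd h hx
    | node => cases b <;> rfl
  rw [Set.ncard_eq_two]
  refine ⟨⟨false :: x.1, isSome_cons false⟩, ⟨true :: x.1, isSome_cons true⟩, by simp, ?_⟩
  ext y
  simp [parent_eq_some_iff, Subtype.ext_iff]

lemma subtree_lift {s : BinaryTree α} {w : List Bool} (hw : subtreeAt t w = some s)
    (y : TreePosition s) : (lift hw y).subtree = y.subtree := by
  simp only [subtree, lift, subtreeAt_append hw]

lemma lift_injective {s : BinaryTree α} {w : List Bool} (hw : subtreeAt t w = some s) :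
    Function.Injective (lift hw) :=
  fun _ _ h => Subtype.ext (List.append_cancel_right (congrArg Subtype.val h))

lemma descendants_eq (x : TreePosition t) :
    descendants parent x = some '' Set.range (lift x.subtreeAt_val) := by
  refine congrArg _ (Set.ext fun z => ⟨fun hz => ?_, ?_⟩)
  · have suffix : x.1 <:+ z.1 := by
      induction hz using Relation.ReflTransGen.head_induction_on with
      | refl => exact List.suffix_rfl
      | head h _ ih =>
        obtain ⟨b, hb⟩ := parent_eq_some_iff.1 h
        exact hb ▸ ih.trans (List.suffix_cons b _)
    obtain ⟨u, hu⟩ := suffix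
    refine ⟨⟨u, ?_⟩, Subtype.ext hu⟩
    rw [← subtreeAt_append x.subtreeAt_val, hu]
    exact z.2
  · rintro ⟨⟨u, hu⟩, rfl⟩
    induction u with
    | nil => exact .refl
    | cons b u ih => exact .head rfl (ih (Option.isSome_of_isSome_bind hu))

end TreePosition

/-- The number of positions of `t` at which the subtree satisfies `P`. -/
noncomputable def subtreeCount (P : BinaryTree α → Prop) (t : BinaryTree α) : ℕ :=
  {x : TreePosition t | P x.subtree}.ncard

variable {P Q : BinaryTree α → Prop}

open TreePosition

lemma subtreeCount_lt {t : BinaryTree α} (hPQ : ∀ s, P s → Q s) (hP : ¬P t) (hQ : Q t) :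
    subtreeCount P t < subtreeCount Q t :=
  Set.ncard_lt_ncard ⟨fun x => hPQ x.subtree, fun h => hP (h (a := top t) hQ)⟩

lemma subtreeCount_pos {t : BinaryTree α} (ht : P t) : 0 < subtreeCount P t :=
  (Set.ncard_pos).2 ⟨top t, ht⟩

lemma subtreeCount_nil (hP : P .nil) : subtreeCount P .nil = 1 := by
  rw [subtreeCount, Set.ncard_eq_one]
  refine ⟨top .nil, Set.ext fun x => ?_⟩
  have hx : x = top .nil :=
    Subtype.ext (List.eq_nil_of_length_eq_zero (Nat.eq_zero_of_add_eq_zero_left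
      (Nat.le_zero.1 (height_add_length_le x.subtreeAt_val))))
  exact iff_of_true (hx ▸ hP) hx

lemma subtreeCount_node [DecidablePred P] (a : α) (l r : BinaryTree α) :
    subtreeCount P (.node a l r) =
      (if P (.node a l r) then 1 else 0) + (subtreeCount P l + subtreeCount P r) := by
  have hl : subtreeAt (.node a l r) [false] = some l := rfl
  have hr : subtreeAt (.node a l r) [true] = some r := rfl
  have decomposition : {x : TreePosition (.node a l r) | P x.subtree} =
      {x | x = top _ ∧ P (.node a l r)} ∪
        (lift hl '' {y | P y.subtree} ∪ lift hr '' {y | P y.subtree}) := by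
    ext ⟨w, hw⟩
    simp only [Set.mem_union, Set.mem_image, Set.mem_ofPred_eq]
    constructor
    · intro hP
      obtain rfl | ⟨u, b, rfl⟩ := w.eq_nil_or_concat'
      · exact .inl ⟨rfl, hP⟩
      · have lift_eq {s} (h : subtreeAt (.node a l r) [b] = some s) :
            ∃ y : TreePosition s, P y.subtree ∧ lift h y = ⟨u ++ [b], hw⟩ :=
          ⟨⟨u, by rwa [← subtreeAt_append h]⟩, by rwa [← subtree_lift h], rfl⟩
        cases b
        · exact .inr (.inl (lift_eq hl))
        · exact .inr (.inr (lift_eq hr))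
    · rintro (⟨hw, hP⟩ | ⟨y, hy, hyw⟩ | ⟨y, hy, hyw⟩)
      · exact hw ▸ hP
      all_goals rwa [← hyw, subtree_lift]
  rw [subtreeCount, decomposition, Set.ncard_union_eq, Set.ncard_union_eq,
    Set.ncard_image_of_injective _ (lift_injective hl),
    Set.ncard_image_of_injective _ (lift_injective hr)]
  · congr 1
    split_ifs with hP <;> simp [hP]
  · rw [Set.disjoint_left]
    rintro _ ⟨y, -, rfl⟩ ⟨z, -, hz⟩
    simp [lift] at hz
  · rw [Set.disjoint_left]
    rintro _ ⟨rfl, -⟩ (⟨y, -, hy⟩ | ⟨y, -, hy⟩) <;> simp [lift, top, Subtype.ext_iff] at hy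

lemma subtreeCount_eq_nil (t : BinaryTree α) : subtreeCount (· = .nil) t = t.numLeaves := by
  classical
  induction t with
  | nil => exact subtreeCount_nil rfl
  | node a l r ihl ihr => simp [subtreeCount_node, ihl, ihr]

end Positions

section Existence

variable {α : Type*}

lemma exists_numLeaves_eq [Inhabited α] {m : ℕ} (hm : 0 < m) :
    ∃ t : BinaryTree α, t.numLeaves = m := by
  induction m, hm using Nat.le_induction with
  | base => exact ⟨.nil, rfl⟩
  | succ m _ ih =>
    obtain ⟨t, ht⟩ := ih
    exact ⟨.node default t .nil, by simp [ht]⟩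

lemma exists_numLeaves_eq_div_le_subtreeCount [Inhabited α] {i m : ℕ}
    (hi : 0 < i) (hm : 0 < m) :
    ∃ t : BinaryTree α, t.numLeaves = m ∧ m / i ≤ subtreeCount (·.numLeaves = i) t := by
  induction m using Nat.strong_induction_on with
  | _ m ih =>
    obtain hlt | rfl | hgt := lt_trichotomy m i
    · obtain ⟨t, ht⟩ := exists_numLeaves_eq (α := α) hm
      exact ⟨t, ht, by simp [Nat.div_eq_of_lt hlt]⟩
    · obtain ⟨t, ht⟩ := exists_numLeaves_eq (α := α) hm
      exact ⟨t, ht, (Nat.div_self hm).trans_le (subtreeCount_pos ht)⟩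
    · obtain ⟨c, hc⟩ := exists_numLeaves_eq (α := α) hi
      obtain ⟨t, ht, hcount⟩ := ih (m - i) (by omega) (by omega)
      refine ⟨.node default c t, by simp only [BinaryTree.numLeaves]; omega, ?_⟩
      have hcpos : 0 < subtreeCount (·.numLeaves = i) c := subtreeCount_pos hc
      rw [Nat.div_eq_sub_div hi hgt.le, subtreeCount_node]
      omega

lemma exists_numLeaves_eq_add_forall_subtreeCount_le [Inhabited α] (t : BinaryTree α)
    (k : ℕ) :
    ∃ t' : BinaryTree α, t'.numLeaves = t.numLeaves + k ∧
      ∀ P, subtreeCount P t ≤ subtreeCount P t' := by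
  classical
  induction k with
  | zero => exact ⟨t, rfl, fun _ => le_rfl⟩
  | succ k ih =>
    obtain ⟨t', ht', hle⟩ := ih
    refine ⟨.node default t' .nil, by simp [ht', add_assoc], fun P => (hle P).trans ?_⟩
    rw [subtreeCount_node]
    omega

lemma exists_numLeaves_eq_div_le_subtreeCount_or [Inhabited α] {i n : ℕ} (hi : 0 < i)
    (hin : i < n) (hne : n ≠ 2 * i) :
    ∃ t : BinaryTree α, t.numLeaves + 1 = n ∧
      n / i ≤ subtreeCount (fun s => s.numLeaves = i ∨ s.numLeaves = n - i) t := by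
  obtain ⟨s, hs, hcount⟩ :=
    exists_numLeaves_eq_div_le_subtreeCount (α := α) hi (Nat.sub_pos_of_lt hin)
  obtain ⟨t, ht, hle⟩ := exists_numLeaves_eq_add_forall_subtreeCount_le s (i - 1)
  refine ⟨t, by omega, le_trans ?_ (hle _)⟩
  rw [Nat.div_eq_sub_div hi hin.le]
  -- The top of `s` is one more position to count: it has `n - i` leaves, and `n - i ≠ i`.
  exact hcount.trans_lt (subtreeCount_lt (fun _ => .inl) (by omega) (.inr hs))

end Existence

section PlantedGraph

variable {α : Type*}

/-- The tree graph on the positions of `t` and an additional root leaf `none`, which is joined to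
the top position. -/
def plantedGraph (t : BinaryTree α) : SimpleGraph (Option (TreePosition t)) :=
  parentGraph TreePosition.parent

variable {t : BinaryTree α}

lemma plantedGraph_ncard_neighborSet_none : ((plantedGraph t).neighborSet none).ncard = 1 := by
  rw [plantedGraph, parentGraph_ncard_neighborSet_none TreePosition.parent_wellFounded,
    TreePosition.ncard_setOf_parent_eq_none]

lemma plantedGraph_ncard_neighborSet_some (x : TreePosition t)
    [Decidable (x.subtree = .nil)] :
    ((plantedGraph t).neighborSet (some x)).ncard = if x.subtree = .nil then 1 else 3 := by
  rw [plantedGraph, parentGraph_ncard_neighborSet_some TreePosition.parent_wellFounded]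
  split_ifs with hx
  · rw [TreePosition.ncard_children_of_subtree_eq_nil hx]
  · rw [TreePosition.ncard_children_of_subtree_ne_nil hx]

lemma plantedGraph_ncard_neighborSet_eq_one_or_three (v : Option (TreePosition t)) :
    ((plantedGraph t).neighborSet v).ncard = 1 ∨ ((plantedGraph t).neighborSet v).ncard = 3 := by
  classical
  cases v with
  | none => exact .inl plantedGraph_ncard_neighborSet_none
  | some x =>
    rw [plantedGraph_ncard_neighborSet_some]
    exact ite_eq_or_eq ..

lemma plantedGraph_leaves :
    {v | ((plantedGraph t).neighborSet v).ncard = 1} =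
      insert none (some '' {x : TreePosition t | x.subtree = .nil}) := by
  classical
  ext v
  cases v with
  | none => exact iff_of_true plantedGraph_ncard_neighborSet_none (Set.mem_insert none _)
  | some x =>
    simp only [Set.mem_ofPred_eq, plantedGraph_ncard_neighborSet_some, ite_eq_left_iff,
      OfNat.ofNat_ne_one, imp_false, not_not, Set.mem_insert_iff, reduceCtorEq, false_or,
      Set.mem_image, Option.some.injEq, exists_eq_right]

lemma plantedGraph_ncard_leaves :
    {v | ((plantedGraph t).neighborSet v).ncard = 1}.ncard = t.numLeaves + 1 := by
  rw [plantedGraph_leaves, Set.ncard_insert_of_notMem (by simp),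
    Set.ncard_image_of_injective _ (Option.some_injective _), ← subtreeCount_eq_nil, subtreeCount]

lemma plantedGraph_ncard_leaves_inter_descendants (x : TreePosition t) :
    ({v | ((plantedGraph t).neighborSet v).ncard = 1} ∩
      descendants TreePosition.parent x).ncard = x.subtree.numLeaves := by
  rw [plantedGraph_leaves, TreePosition.descendants_eq, Set.insert_inter_of_notMem (by simp),
    ← Set.image_inter (Option.some_injective _), ← Set.image_preimage_eq_inter_range,
    Set.ncard_image_of_injective _ (Option.some_injective _),
    Set.ncard_image_of_injective _ (TreePosition.lift_injective _)]
  simp only [Set.preimage_ofPred_eq, TreePosition.subtree_lift]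
  exact subtreeCount_eq_nil x.subtree

lemma exists_component_ncard_leaves_eq {i : ℕ} {x : TreePosition t}
    (hx : x.subtree.numLeaves = i ∨ x.subtree.numLeaves + i = t.numLeaves + 1) :
    ∃ c : ((plantedGraph t).deleteEdges {parentEdge TreePosition.parent x}).ConnectedComponent,
      {v | ((plantedGraph t).neighborSet v).ncard = 1 ∧
        ((plantedGraph t).deleteEdges {parentEdge TreePosition.parent x}).connectedComponentMk v =
          c}.ncard = i := by
  have below := plantedGraph_ncard_leaves_inter_descendants x
  rcases hx with hx | hx
  · refine ⟨SimpleGraph.connectedComponentMk _ (some x), ?_⟩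
    simp only [SimpleGraph.ConnectedComponent.eq, plantedGraph,
      reachable_some_iff_mem_descendants TreePosition.parent_wellFounded]
    exact below.trans hx
  · refine ⟨SimpleGraph.connectedComponentMk _ none, ?_⟩
    have total := Set.ncard_inter_add_ncard_sdiff_eq_ncard
      {v | ((plantedGraph t).neighborSet v).ncard = 1} (descendants TreePosition.parent x)
    rw [below, plantedGraph_ncard_leaves, ← hx] at total
    simp only [SimpleGraph.ConnectedComponent.eq, plantedGraph,
      reachable_none_iff_notMem_descendants TreePosition.parent_wellFounded]
    exact Nat.add_left_cancel total

end PlantedGraph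

theorem exists_trivalent_tree_many_separating_edges_general (n i : ℕ) (hi : 0 < i) (hin : i < n)
    (hne : n ≠ 2 * i) :
    ∃ (V : Type) (_ : Fintype V) (G : SimpleGraph V),
      G.IsTree ∧
      (∀ v : V, (G.neighborSet v).ncard = 1 ∨ (G.neighborSet v).ncard = 3) ∧
      {v : V | (G.neighborSet v).ncard = 1}.ncard = n ∧
      ∃ F : Finset (Sym2 V),
        n / i ≤ F.card ∧
        ∀ e ∈ F, e ∈ G.edgeSet ∧
          ∃ c : (G.deleteEdges {e}).ConnectedComponent,
            {v : V | (G.neighborSet v).ncard = 1 ∧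
              (G.deleteEdges {e}).connectedComponentMk v = c}.ncard = i := by
  obtain ⟨t, rfl, hcount⟩ := exists_numLeaves_eq_div_le_subtreeCount_or (α := Unit) hi hin hne
  have wf := TreePosition.parent_wellFounded (t := t)
  let F := parentEdge TreePosition.parent ''
    {x : TreePosition t | x.subtree.numLeaves = i ∨ x.subtree.numLeaves = t.numLeaves + 1 - i}
  refine ⟨Option (TreePosition t), Fintype.ofFinite _, plantedGraph t, parentGraph_isTree wf,
    plantedGraph_ncard_neighborSet_eq_one_or_three, plantedGraph_ncard_leaves,
    F.toFinite.toFinset, ?_, fun e he => ?_⟩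
  · rw [← Set.ncard_eq_toFinset_card, Set.ncard_image_of_injective _ (parentEdge_injective wf)]
    exact hcount
  · obtain ⟨x, hx, rfl⟩ := (Set.Finite.mem_toFinset _).1 he
    exact ⟨parentGraph_adj_parent wf x,
      exists_component_ncard_leaves_eq (hx.imp_right fun h => by omega)⟩

/-- For all integers `n`, `i` with `2 ≤ i` and `3 * i ≤ n`, there is a finite tree in which
every vertex has degree 1 or 3, with exactly `n` vertices of degree 1, having at least
`⌊n / i⌋` distinct edges `e` such that one of the two connected components of the graph
obtained by deleting `e` contains exactly `i` vertices of degree 1 of the tree. -/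
theorem exists_trivalent_tree_many_separating_edges (n i : ℕ) (hi : 2 ≤ i) (hni : 3 * i ≤ n) :
    ∃ (V : Type) (_ : Fintype V) (G : SimpleGraph V),
      G.IsTree ∧
      (∀ v : V, (G.neighborSet v).ncard = 1 ∨ (G.neighborSet v).ncard = 3) ∧
      {v : V | (G.neighborSet v).ncard = 1}.ncard = n ∧
      ∃ F : Finset (Sym2 V),
        n / i ≤ F.card ∧
        ∀ e ∈ F, e ∈ G.edgeSet ∧
          ∃ c : (G.deleteEdges {e}).ConnectedComponent,
            {v : V | (G.neighborSet v).ncard = 1 ∧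
              (G.deleteEdges {e}).connectedComponentMk v = c}.ncard = i :=
  exists_trivalent_tree_many_separating_edges_general n i (by omega) (by omega) (by omega)
end
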